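/- arXiv:2111.10238 — 2 statements merged into one kernel-verified Lean document; each statement's English description precedes it below -/
import Mathlib

section
/- No-gap second-order optimality condition: Assume that the map h ↦ F''(x̄)(h,h) is sequentially weak-* lower semicontinuous on X, that the non-degeneracy condition (NDC) holds (for all sequences h_k ⇀* 0 in X with ‖h_k‖_X = 1 and t_k ↓ 0 one has liminf_{k→∞} [ (1/t_k²)(G(x̄ + t_k h_k) − G(x̄)) + ⟨F'(x̄), h_k⟩/t_k + (1/2) F''(x̄)(h_k,h_k) ] > 0), and that either (i) h ↦ F''(x̄)(h,h) is sequentially weak-* upper semicontinuous or (ii) G is strongly twice epi-differentiable at x̄ for −F'(x̄). Then the condition F''(x̄)(h,h) + G''(x̄, −F'(x̄); h) > 0 for all h ∈ X \ {0} is equivalent to the existence of c > 0 and ε > 0 such that F(x) + G(x) ≥ F(x̄) + G(x̄) + (c/2)‖x − x̄‖²_X for all x ∈ B_ε(x̄). -/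
open Filter Topology

/-- The weak-* second subderivative `G''(x, w; h)` of `G : X → (−∞,∞]` on the dual
`X = Y*`, at `x` for `w ∈ Y`, in direction `h`. -/
noncomputable def weakStarSecondSubderiv {Y : Type*} [NormedAddCommGroup Y] [NormedSpace ℝ Y]
    (G : (Y →L[ℝ] ℝ) → EReal) (x : Y →L[ℝ] ℝ) (w : Y) (h : Y →L[ℝ] ℝ) : EReal :=
  sInf { L : EReal | ∃ (t : ℕ → ℝ) (hs : ℕ → (Y →L[ℝ] ℝ)),
    (∀ k, 0 < t k) ∧ Tendsto t atTop (𝓝 0) ∧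
    (∀ z : Y, Tendsto (fun k => hs k z) atTop (𝓝 (h z))) ∧
    L = liminf (fun k => (((2 / (t k) ^ 2 : ℝ)) : EReal) *
          (G (x + t k • hs k) - G x - (((t k * hs k w : ℝ)) : EReal))) atTop }

/-- `G` is strongly twice epi-differentiable at `x` for `w`. -/
def StronglyTwiceEpiDiff {Y : Type*} [NormedAddCommGroup Y] [NormedSpace ℝ Y]
    (G : (Y →L[ℝ] ℝ) → EReal) (x : Y →L[ℝ] ℝ) (w : Y) : Prop :=
  ∀ h : Y →L[ℝ] ℝ, ∀ t : ℕ → ℝ, (∀ k, 0 < t k) → Tendsto t atTop (𝓝 0) →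
    ∃ hs : ℕ → (Y →L[ℝ] ℝ), Tendsto hs atTop (𝓝 h) ∧
      Tendsto (fun k => (((2 / (t k) ^ 2 : ℝ)) : EReal) *
          (G (x + t k • hs k) - G x - (((t k * hs k w : ℝ)) : EReal))) atTop
        (𝓝 (weakStarSecondSubderiv G x w h))

/-!
Along `y = x + t h`, the increment of `F + G` divided by `t ^ 2 / 2` equals the second-order
quotient of `G` for `-F'` plus `Q h` plus twice the Taylor remainder, where `Q h = F''(x)(h, h)`.
So growth at `y` with constant `c` says that this sum is at least `c ‖h‖ ^ 2`.

Necessity: the remainder vanishes in the limit and the norm is weakly-* lower semicontinuous, so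
`c ‖h‖ ^ 2 - Q h` bounds `G''(x, -F'; h)` from below as soon as `Q` is upper semicontinuous along
the sequences computing `G''`. Both alternatives (i) and (ii) provide this.

Sufficiency: if growth fails for all constants, normalize the violating points to `x + t_k h_k`
with `‖h_k‖ = 1` and extract a weak-* limit `h`. The upper limit of quotient plus `Q h_k` is at most
zero, which contradicts (NDC) if `h = 0` and, by lower semicontinuity of `Q`, the positivity
assumption otherwise.
-/

section Definitions

variable {Y : Type*} [NormedAddCommGroup Y] [NormedSpace ℝ Y]

/-- Weak-* convergence `h_k ⇀* h` of a sequence in the dual of `Y`, as pointwise convergence. -/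
def WeakStarTendsto (hs : ℕ → (Y →L[ℝ] ℝ)) (h : Y →L[ℝ] ℝ) : Prop :=
  ∀ z : Y, Tendsto (fun k => hs k z) atTop (𝓝 (h z))

/-- Sequential weak-* lower semicontinuity of `Q` on the dual of `Y`. -/
def WeakStarSeqLSC (Q : (Y →L[ℝ] ℝ) → ℝ) : Prop :=
  ∀ (h : Y →L[ℝ] ℝ) (hs : ℕ → (Y →L[ℝ] ℝ)), WeakStarTendsto hs h →
    (Q h : EReal) ≤ liminf (fun k => (Q (hs k) : EReal)) atTop

/-- Sequential weak-* upper semicontinuity of `Q` on the dual of `Y`. -/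
def WeakStarSeqUSC (Q : (Y →L[ℝ] ℝ) → ℝ) : Prop :=
  ∀ (h : Y →L[ℝ] ℝ) (hs : ℕ → (Y →L[ℝ] ℝ)), WeakStarTendsto hs h →
    limsup (fun k => (Q (hs k) : EReal)) atTop ≤ (Q h : EReal)

/-- The second-order difference quotient whose lower limits define `weakStarSecondSubderiv`. -/
noncomputable def secondOrderQuotient (G : (Y →L[ℝ] ℝ) → EReal) (x : Y →L[ℝ] ℝ) (w : Y)
    (t : ℝ) (h : Y →L[ℝ] ℝ) : EReal :=
  ((2 / t ^ 2 : ℝ) : EReal) * (G (x + t • h) - G x - ((t * h w : ℝ) : EReal))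

/-- The remainder of the second-order Taylor expansion of `F` at `x`, divided by `t ^ 2`. The
second-order term `Q` stands for `h ↦ F''(x)(h, h)` but need not come from a bilinear form. -/
noncomputable def taylorRemainder (F : (Y →L[ℝ] ℝ) → ℝ) (x : Y →L[ℝ] ℝ) (F' : Y)
    (Q : (Y →L[ℝ] ℝ) → ℝ) (t : ℝ) (h : Y →L[ℝ] ℝ) : ℝ :=
  (F (x + t • h) - F x - t * h F' - (1 / 2) * t ^ 2 * Q h) / t ^ 2

/-- Second-order Taylor expansion of `F` at `x` relative to the domain of `G`, uniform along
weak-* convergent sequences of directions. -/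
def HasWeakStarTaylorOnDom (F : (Y →L[ℝ] ℝ) → ℝ) (G : (Y →L[ℝ] ℝ) → EReal) (x : Y →L[ℝ] ℝ)
    (F' : Y) (Q : (Y →L[ℝ] ℝ) → ℝ) : Prop :=
  ∀ (t : ℕ → ℝ) (hs : ℕ → (Y →L[ℝ] ℝ)) (h : Y →L[ℝ] ℝ),
    (∀ k, 0 < t k) → Tendsto t atTop (𝓝 0) → WeakStarTendsto hs h →
    (∀ k, G (x + t k • hs k) ≠ ⊤) →
    Tendsto (fun k => taylorRemainder F x F' Q (t k) (hs k)) atTop (𝓝 0)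

/-- The non-degeneracy condition (NDC): it excludes the loss of coercivity along normalized
directions that converge weakly-* to zero. -/
def NonDegenerate (G : (Y →L[ℝ] ℝ) → EReal) (x : Y →L[ℝ] ℝ) (F' : Y)
    (Q : (Y →L[ℝ] ℝ) → ℝ) : Prop :=
  ∀ (t : ℕ → ℝ) (hs : ℕ → (Y →L[ℝ] ℝ)),
    (∀ k, 0 < t k) → Tendsto t atTop (𝓝 0) → WeakStarTendsto hs 0 → (∀ k, ‖hs k‖ = 1) →
    (0 : EReal) < liminf (fun k =>
      ((1 / (t k) ^ 2 : ℝ) : EReal) * (G (x + t k • hs k) - G x)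
        + ((hs k F' / t k + (1 / 2) * Q (hs k) : ℝ) : EReal)) atTop

/-- The inequality of quadratic growth of `F + G` from `x` with constant `c`, at the single
point `y`. -/
def QuadraticGrowthAt (F : (Y →L[ℝ] ℝ) → ℝ) (G : (Y →L[ℝ] ℝ) → EReal) (x : Y →L[ℝ] ℝ) (c : ℝ)
    (y : Y →L[ℝ] ℝ) : Prop :=
  (F x : EReal) + G x + ((c / 2 * ‖y - x‖ ^ 2 : ℝ) : EReal) ≤ (F y : EReal) + G y

end Definitions

section WeakStarSequences

variable {Y : Type*} [NormedAddCommGroup Y] [NormedSpace ℝ Y]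
  {hs : ℕ → (Y →L[ℝ] ℝ)} {h : Y →L[ℝ] ℝ}

theorem WeakStarTendsto.comp_strictMono (hw : WeakStarTendsto hs h) {φ : ℕ → ℕ}
    (hφ : StrictMono φ) : WeakStarTendsto (hs ∘ φ) h :=
  fun z => (hw z).comp hφ.tendsto_atTop

theorem weakStarTendsto_of_tendsto (hlim : Tendsto hs atTop (𝓝 h)) : WeakStarTendsto hs h :=
  fun z => ((continuous_eval_const z).tendsto h).comp hlim

theorem WeakStarTendsto.exists_norm_le [CompleteSpace Y] (hw : WeakStarTendsto hs h) :
    ∃ C : ℝ, ∀ k, ‖hs k‖ ≤ C := by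
  refine banach_steinhaus fun z => ?_
  obtain ⟨C, hC⟩ := (hw z).norm.bddAbove_range
  exact ⟨C, fun k => hC ⟨k, rfl⟩⟩

theorem WeakStarTendsto.eventually_lt_norm (hw : WeakStarTendsto hs h) {r : ℝ} (hr : r < ‖h‖) :
    ∀ᶠ k in atTop, r < ‖hs k‖ := by
  obtain ⟨z, hz, hrz⟩ := h.exists_lt_apply_of_lt_opNorm hr
  filter_upwards [(hw z).norm.eventually_const_lt hrz] with k hk
  exact hk.trans_le ((hs k).unit_le_opNorm z hz.le)

theorem WeakStarTendsto.eventually_lt_mul_norm_sq (hw : WeakStarTendsto hs h) {b c : ℝ}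
    (hc : 0 ≤ c) (hb : b < c * ‖h‖ ^ 2) : ∀ᶠ k in atTop, b < c * ‖hs k‖ ^ 2 := by
  rcases (norm_nonneg h).eq_or_lt with h0 | hpos
  · refine Eventually.of_forall fun k => ?_
    have : b < 0 := by simpa [← h0] using hb
    exact this.trans_le (by positivity)
  have hnhds : ∀ᶠ r in 𝓝[<] ‖h‖, b < c * r ^ 2 :=
    nhdsWithin_le_nhds
      ((Continuous.tendsto (f := fun r => c * r ^ 2) (by fun_prop) ‖h‖).eventually_const_lt hb)
  obtain ⟨r, hbr, hr0, hr⟩ := (hnhds.and (Ioo_mem_nhdsLT hpos)).exists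
  filter_upwards [hw.eventually_lt_norm hr] with k hk
  exact hbr.trans_le (mul_le_mul_of_nonneg_left (pow_le_pow_left₀ hr0.le hk.le 2) hc)

theorem exists_subseq_weakStarTendsto [TopologicalSpace.SeparableSpace Y] {r : ℝ}
    (hr : ∀ k, ‖hs k‖ ≤ r) :
    ∃ (h : Y →L[ℝ] ℝ) (φ : ℕ → ℕ), StrictMono φ ∧ WeakStarTendsto (hs ∘ φ) h := by
  obtain ⟨h, -, φ, hφ, hlim⟩ := WeakDual.isSeqCompact_closedBall ℝ Y (0 : StrongDual ℝ Y) r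
    (x := fun k => StrongDual.toWeakDual (hs k)) fun k => mem_closedBall_zero_iff.2 (hr k)
  exact ⟨WeakDual.toStrongDual h, φ, hφ,
    fun z => ((WeakDual.eval_continuous z).tendsto h).comp hlim⟩

theorem WeakStarSeqUSC.eventually_lt {Q : (Y →L[ℝ] ℝ) → ℝ} (hQ : WeakStarSeqUSC Q)
    (hw : WeakStarTendsto hs h) {b : ℝ} (hb : Q h < b) : ∀ᶠ k in atTop, Q (hs k) < b := by
  have hlt : limsup (fun k => (Q (hs k) : EReal)) atTop < (b : EReal) :=
    (hQ h hs hw).trans_lt (EReal.coe_lt_coe_iff.2 hb)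
  exact (eventually_lt_of_limsup_lt hlt).mono fun k => EReal.coe_lt_coe_iff.1

end WeakStarSequences

section SecondOrderQuotient

variable {Y : Type*} [NormedAddCommGroup Y] [NormedSpace ℝ Y]
  {F : (Y →L[ℝ] ℝ) → ℝ} {G : (Y →L[ℝ] ℝ) → EReal} {x : Y →L[ℝ] ℝ} {F' : Y}
  {Q : (Y →L[ℝ] ℝ) → ℝ} {c t : ℝ} {h : Y →L[ℝ] ℝ}

theorem weakStarSecondSubderiv_le_liminf {w : Y} {t : ℕ → ℝ} {hs : ℕ → (Y →L[ℝ] ℝ)}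
    (ht : ∀ k, 0 < t k) (ht0 : Tendsto t atTop (𝓝 0)) (hw : WeakStarTendsto hs h) :
    weakStarSecondSubderiv G x w h
      ≤ liminf (fun k => secondOrderQuotient G x w (t k) (hs k)) atTop :=
  sInf_le ⟨t, hs, ht, ht0, hw, rfl⟩

theorem secondOrderQuotient_eq_top {w : Y} (hx : G x ≠ ⊤) (ht : 0 < t)
    (hy : G (x + t • h) = ⊤) : secondOrderQuotient G x w t h = ⊤ := by
  rw [secondOrderQuotient, hy, EReal.top_sub hx, EReal.top_sub_coe,
    EReal.coe_mul_top_of_pos (by positivity)]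

theorem quadraticGrowthAt_self : QuadraticGrowthAt F G x c x := by
  simp [QuadraticGrowthAt]

theorem quadraticGrowthAt_of_eq_top {y : Y →L[ℝ] ℝ} (hy : G y = ⊤) :
    QuadraticGrowthAt F G x c y := by
  simp [QuadraticGrowthAt, hy]

theorem quadraticGrowthAt_iff_le_secondOrderQuotient (F' : Y) (Q : (Y →L[ℝ] ℝ) → ℝ)
    (hG : ∀ y, G y ≠ ⊥) (hx : G x ≠ ⊤) (ht : 0 < t) :
    QuadraticGrowthAt F G x c (x + t • h) ↔
      ((c * ‖h‖ ^ 2 - Q h - 2 * taylorRemainder F x F' Q t h : ℝ) : EReal)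
        ≤ secondOrderQuotient G x (-F') t h := by
  rcases eq_or_ne (G (x + t • h)) ⊤ with hy | hy
  · simp only [quadraticGrowthAt_of_eq_top hy, secondOrderQuotient_eq_top hx ht hy, le_top]
  have hnorm : ‖x + t • h - x‖ = t * ‖h‖ := by
    rw [add_sub_cancel_left, norm_smul, Real.norm_of_nonneg ht.le]
  obtain ⟨a, ha⟩ : ∃ a : ℝ, (a : EReal) = G x := CanLift.prf _ ⟨hx, hG _⟩
  obtain ⟨b, hb⟩ : ∃ b : ℝ, (b : EReal) = G (x + t • h) := CanLift.prf _ ⟨hy, hG _⟩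
  rw [QuadraticGrowthAt, secondOrderQuotient, taylorRemainder, hnorm, ← ha, ← hb]
  norm_cast
  rw [map_neg, ← sub_nonneg, ← sub_nonneg (b := c * ‖h‖ ^ 2 - _ - _)]
  have hscale : 2 / t ^ 2 * (b - a - t * -h F') - (c * ‖h‖ ^ 2 - Q h
      - 2 * ((F (x + t • h) - F x - t * h F' - 1 / 2 * t ^ 2 * Q h) / t ^ 2))
      = 2 / t ^ 2 * (F (x + t • h) + b - (F x + a + c / 2 * (t * ‖h‖) ^ 2)) := by
    field_simp
    ring
  rw [hscale, mul_nonneg_iff_of_pos_left (by positivity)]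

theorem nonDegeneracyQuotient_eq (hG : ∀ y, G y ≠ ⊥) (hx : G x ≠ ⊤) (ht : 0 < t) :
    ((1 / t ^ 2 : ℝ) : EReal) * (G (x + t • h) - G x)
        + ((h F' / t + (1 / 2) * Q h : ℝ) : EReal)
      = ((1 / 2 : ℝ) : EReal) * ((Q h : EReal) + secondOrderQuotient G x (-F') t h) := by
  rcases eq_or_ne (G (x + t • h)) ⊤ with hy | hy
  · rw [secondOrderQuotient_eq_top hx ht hy, hy, EReal.top_sub hx, EReal.coe_add_top,
      EReal.coe_mul_top_of_pos (by positivity), EReal.coe_mul_top_of_pos (by positivity),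
      EReal.top_add_coe]
  obtain ⟨a, ha⟩ : ∃ a : ℝ, (a : EReal) = G x := CanLift.prf _ ⟨hx, hG _⟩
  obtain ⟨b, hb⟩ : ∃ b : ℝ, (b : EReal) = G (x + t • h) := CanLift.prf _ ⟨hy, hG _⟩
  rw [secondOrderQuotient, ← ha, ← hb, map_neg]
  norm_cast
  field_simp
  ring

end SecondOrderQuotient

section Necessity

variable {Y : Type*} [NormedAddCommGroup Y] [NormedSpace ℝ Y]
  {F : (Y →L[ℝ] ℝ) → ℝ} {G : (Y →L[ℝ] ℝ) → EReal} {x : Y →L[ℝ] ℝ} {F' : Y}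
  {Q : (Y →L[ℝ] ℝ) → ℝ} {t : ℕ → ℝ} {hs : ℕ → (Y →L[ℝ] ℝ)} {h : Y →L[ℝ] ℝ} {c ε : ℝ}

theorem HasWeakStarTaylorOnDom.eventually_lt (hTaylor : HasWeakStarTaylorOnDom F G x F' Q)
    (ht : ∀ k, 0 < t k) (ht0 : Tendsto t atTop (𝓝 0)) (hw : WeakStarTendsto hs h)
    {δ : ℝ} (hδ : 0 < δ) :
    ∀ᶠ k in atTop, G (x + t k • hs k) ≠ ⊤ → taylorRemainder F x F' Q (t k) (hs k) < δ := by
  by_contra hfreq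
  obtain ⟨φ, hφ, hlarge⟩ := extraction_of_frequently_atTop (not_eventually.1 hfreq)
  push Not at hlarge
  have hlim := hTaylor (t ∘ φ) (hs ∘ φ) h (fun k => ht _) (ht0.comp hφ.tendsto_atTop)
    (hw.comp_strictMono hφ) fun k => (hlarge k).1
  obtain ⟨k, hk⟩ := (hlim.eventually_lt_const hδ).exists
  exact hk.not_ge (hlarge k).2

theorem eventually_quadraticGrowthAt [CompleteSpace Y] (hε : 0 < ε)
    (hgrowth : ∀ y, ‖y - x‖ ≤ ε → QuadraticGrowthAt F G x c y)
    (ht : ∀ k, 0 < t k) (ht0 : Tendsto t atTop (𝓝 0)) (hw : WeakStarTendsto hs h) :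
    ∀ᶠ k in atTop, QuadraticGrowthAt F G x c (x + t k • hs k) := by
  obtain ⟨C, hC⟩ := hw.exists_norm_le
  have htC : Tendsto (fun k => t k * C) atTop (𝓝 0) := by simpa using ht0.mul_const C
  filter_upwards [htC.eventually_lt_const hε] with k hk
  refine hgrowth _ ?_
  calc ‖x + t k • hs k - x‖ = t k * ‖hs k‖ := by
        rw [add_sub_cancel_left, norm_smul, Real.norm_of_nonneg (ht k).le]
    _ ≤ t k * C := mul_le_mul_of_nonneg_left (hC k) (ht k).le
    _ ≤ ε := hk.le

theorem le_liminf_secondOrderQuotient_of_quadraticGrowth [CompleteSpace Y]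
    (hG : ∀ y, G y ≠ ⊥) (hx : G x ≠ ⊤) (hTaylor : HasWeakStarTaylorOnDom F G x F' Q)
    (hc : 0 ≤ c) (hε : 0 < ε) (hgrowth : ∀ y, ‖y - x‖ ≤ ε → QuadraticGrowthAt F G x c y)
    (ht : ∀ k, 0 < t k) (ht0 : Tendsto t atTop (𝓝 0)) (hw : WeakStarTendsto hs h)
    (hQ : ∀ b, Q h < b → ∀ᶠ k in atTop, Q (hs k) < b) :
    ((c * ‖h‖ ^ 2 - Q h : ℝ) : EReal)
      ≤ liminf (fun k => secondOrderQuotient G x (-F') (t k) (hs k)) atTop := by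
  refine EReal.ge_of_forall_gt_iff_ge.1 fun r hr => ?_
  obtain ⟨δ, hδ, hrδ⟩ : ∃ δ > 0, r + 4 * δ = c * ‖h‖ ^ 2 - Q h :=
    ⟨(c * ‖h‖ ^ 2 - Q h - r) / 4, by linarith [EReal.coe_lt_coe_iff.1 hr], by ring⟩
  refine le_liminf_of_le (by isBoundedDefault) ?_
  filter_upwards [eventually_quadraticGrowthAt hε hgrowth ht ht0 hw,
    hTaylor.eventually_lt ht ht0 hw hδ,
    hw.eventually_lt_mul_norm_sq hc (sub_lt_self (c * ‖h‖ ^ 2) hδ),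
    hQ _ (lt_add_of_pos_right (Q h) hδ)] with k hgrowth_k hrem_k hnorm_k hQ_k
  by_cases hy : G (x + t k • hs k) = ⊤
  · rw [secondOrderQuotient_eq_top hx (ht k) hy]
    exact le_top
  · refine le_trans (EReal.coe_le_coe_iff.2 ?_)
      ((quadraticGrowthAt_iff_le_secondOrderQuotient F' Q hG hx (ht k)).1 hgrowth_k)
    linarith [hrem_k hy]

theorem mul_norm_sq_sub_le_weakStarSecondSubderiv [CompleteSpace Y]
    (hG : ∀ y, G y ≠ ⊥) (hx : G x ≠ ⊤) (hTaylor : HasWeakStarTaylorOnDom F G x F' Q)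
    (hAlt : WeakStarSeqUSC Q ∨ UpperSemicontinuous Q ∧ StronglyTwiceEpiDiff G x (-F'))
    (hc : 0 ≤ c) (hε : 0 < ε) (hgrowth : ∀ y, ‖y - x‖ ≤ ε → QuadraticGrowthAt F G x c y)
    (h : Y →L[ℝ] ℝ) :
    ((c * ‖h‖ ^ 2 - Q h : ℝ) : EReal) ≤ weakStarSecondSubderiv G x (-F') h := by
  rcases hAlt with husc | ⟨husc, hepi⟩
  · refine le_sInf ?_
    rintro _ ⟨t, hs, ht, ht0, hw, rfl⟩
    exact le_liminf_secondOrderQuotient_of_quadraticGrowth hG hx hTaylor hc hε hgrowth ht ht0 hw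
      fun b hb => husc.eventually_lt hw hb
  · have ht (k : ℕ) : 0 < 1 / ((k : ℝ) + 1) := by positivity
    have ht0 := tendsto_one_div_add_atTop_nhds_zero_nat (𝕜 := ℝ)
    obtain ⟨hs, hlim, hquot⟩ := hepi h _ ht ht0
    rw [← hquot.liminf_eq]
    exact le_liminf_secondOrderQuotient_of_quadraticGrowth hG hx hTaylor hc hε hgrowth ht ht0
      (weakStarTendsto_of_tendsto hlim) fun b hb => hlim.eventually (husc h b hb)

end Necessity

section Sufficiency

variable {Y : Type*} [NormedAddCommGroup Y] [NormedSpace ℝ Y]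
  {F : (Y →L[ℝ] ℝ) → ℝ} {G : (Y →L[ℝ] ℝ) → EReal} {x : Y →L[ℝ] ℝ} {F' : Y}
  {Q : (Y →L[ℝ] ℝ) → ℝ} {t : ℕ → ℝ} {hs : ℕ → (Y →L[ℝ] ℝ)} {h : Y →L[ℝ] ℝ}

theorem add_weakStarSecondSubderiv_le_liminf (hlsc : WeakStarSeqLSC Q) {w : Y}
    (ht : ∀ k, 0 < t k) (ht0 : Tendsto t atTop (𝓝 0)) (hw : WeakStarTendsto hs h) :
    (Q h : EReal) + weakStarSecondSubderiv G x w h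
      ≤ liminf (fun k => (Q (hs k) : EReal) + secondOrderQuotient G x w (t k) (hs k)) atTop :=
  (add_le_add (hlsc h hs hw) (weakStarSecondSubderiv_le_liminf ht ht0 hw)).trans
    EReal.le_liminf_add

theorem NonDegenerate.liminf_pos (hNDC : NonDegenerate G x F' Q) (hG : ∀ y, G y ≠ ⊥)
    (hx : G x ≠ ⊤) (ht : ∀ k, 0 < t k) (ht0 : Tendsto t atTop (𝓝 0))
    (hw : WeakStarTendsto hs 0) (hnorm : ∀ k, ‖hs k‖ = 1) :
    0 < liminf (fun k => (Q (hs k) : EReal) + secondOrderQuotient G x (-F') (t k) (hs k))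
      atTop := by
  have hpos := hNDC t hs ht ht0 hw hnorm
  have hhalf : (0 : EReal) < ((1 / 2 : ℝ) : EReal) := EReal.coe_pos.2 one_half_pos
  simp only [nonDegeneracyQuotient_eq hG hx (ht _)] at hpos
  rw [EReal.liminf_const_mul_of_nonneg_of_ne_top hhalf.le (EReal.coe_ne_top _)] at hpos
  by_contra! hle
  exact hpos.not_ge (mul_nonpos_of_nonneg_of_nonpos hhalf.le hle)

theorem exists_seq_not_quadraticGrowthAt
    (hfail : ¬ ∃ c : ℝ, 0 < c ∧ ∃ ε : ℝ, 0 < ε ∧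
      ∀ y, ‖y - x‖ ≤ ε → QuadraticGrowthAt F G x c y) :
    ∃ (c t : ℕ → ℝ) (hs : ℕ → (Y →L[ℝ] ℝ)), Tendsto c atTop (𝓝 0) ∧ (∀ k, 0 < t k) ∧
      Tendsto t atTop (𝓝 0) ∧ (∀ k, ‖hs k‖ = 1) ∧
      ∀ k, ¬ QuadraticGrowthAt F G x (c k) (x + t k • hs k) := by
  push Not at hfail
  have hpos (k : ℕ) : 0 < 1 / ((k : ℝ) + 1) := by positivity
  have hlim := tendsto_one_div_add_atTop_nhds_zero_nat (𝕜 := ℝ)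
  choose y hyε hy using fun k => hfail _ (hpos k) _ (hpos k)
  have hne (k : ℕ) : y k - x ≠ 0 := fun h0 =>
    hy k (sub_eq_zero.1 h0 ▸ quadraticGrowthAt_self)
  refine ⟨_, fun k => ‖y k - x‖, fun k => ‖y k - x‖⁻¹ • (y k - x), hlim,
    fun k => norm_pos_iff.2 (hne k), squeeze_zero (fun k => norm_nonneg _) hyε hlim,
    fun k => norm_smul_inv_norm (hne k), fun k => ?_⟩
  rw [smul_inv_smul₀ (norm_ne_zero_iff.2 (hne k)), add_sub_cancel]
  exact hy k

theorem limsup_le_zero_of_not_quadraticGrowthAt (hG : ∀ y, G y ≠ ⊥) (hx : G x ≠ ⊤)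
    {c : ℕ → ℝ} (hc0 : Tendsto c atTop (𝓝 0)) (ht : ∀ k, 0 < t k) (hnorm : ∀ k, ‖hs k‖ = 1)
    (hrem : Tendsto (fun k => taylorRemainder F x F' Q (t k) (hs k)) atTop (𝓝 0))
    (hfail : ∀ k, ¬ QuadraticGrowthAt F G x (c k) (x + t k • hs k)) :
    limsup (fun k => (Q (hs k) : EReal) + secondOrderQuotient G x (-F') (t k) (hs k)) atTop
      ≤ 0 := by
  have hbound (k : ℕ) : (Q (hs k) : EReal) + secondOrderQuotient G x (-F') (t k) (hs k)
      ≤ ((c k - 2 * taylorRemainder F x F' Q (t k) (hs k) : ℝ) : EReal) := by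
    have hlt := not_le.1
      (mt (quadraticGrowthAt_iff_le_secondOrderQuotient F' Q hG hx (ht k)).2 (hfail k))
    refine (add_le_add_right hlt.le _).trans_eq ?_
    rw [hnorm k, ← EReal.coe_add]
    congr 1
    ring
  have hlim : Tendsto (fun k => c k - 2 * taylorRemainder F x F' Q (t k) (hs k)) atTop (𝓝 0) := by
    simpa using hc0.sub (hrem.const_mul 2)
  calc _ ≤ limsup (fun k =>
        ((c k - 2 * taylorRemainder F x F' Q (t k) (hs k) : ℝ) : EReal)) atTop :=
        limsup_le_limsup (Eventually.of_forall hbound)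
    _ = 0 := (EReal.tendsto_coe.2 hlim).limsup_eq

theorem exists_quadraticGrowth_of_pos [TopologicalSpace.SeparableSpace Y]
    (hG : ∀ y, G y ≠ ⊥) (hx : G x ≠ ⊤) (hTaylor : HasWeakStarTaylorOnDom F G x F' Q)
    (hlsc : WeakStarSeqLSC Q) (hNDC : NonDegenerate G x F' Q)
    (hpos : ∀ h : Y →L[ℝ] ℝ, h ≠ 0 → 0 < (Q h : EReal) + weakStarSecondSubderiv G x (-F') h) :
    ∃ c : ℝ, 0 < c ∧ ∃ ε : ℝ, 0 < ε ∧ ∀ y, ‖y - x‖ ≤ ε → QuadraticGrowthAt F G x c y := by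
  by_contra hcon
  obtain ⟨c, t, hs, hc0, ht, ht0, hnorm, hfail⟩ := exists_seq_not_quadraticGrowthAt hcon
  obtain ⟨h, φ, hφ, hw⟩ := exists_subseq_weakStarTendsto fun k => (hnorm k).le
  have htφ0 : Tendsto (t ∘ φ) atTop (𝓝 0) := ht0.comp hφ.tendsto_atTop
  have hrem := hTaylor (t ∘ φ) (hs ∘ φ) h (fun k => ht _) htφ0 hw
    fun k hy => hfail _ (quadraticGrowthAt_of_eq_top hy)
  have hlimsup := limsup_le_zero_of_not_quadraticGrowthAt hG hx (hc0.comp hφ.tendsto_atTop)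
    (fun k => ht _) (fun k => hnorm _) hrem fun k => hfail (φ k)
  have hliminf : 0 < liminf (fun k => (Q ((hs ∘ φ) k) : EReal)
      + secondOrderQuotient G x (-F') ((t ∘ φ) k) ((hs ∘ φ) k)) atTop := by
    rcases eq_or_ne h 0 with rfl | hne
    · exact hNDC.liminf_pos hG hx (fun k => ht _) htφ0 hw fun k => hnorm _
    · exact (hpos h hne).trans_le
        (add_weakStarSecondSubderiv_le_liminf hlsc (fun k => ht _) htφ0 hw)
  exact hliminf.not_ge ((liminf_le_limsup).trans hlimsup)

end Sufficiency

theorem no_gap_second_order_condition_general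
    {Y : Type*} [NormedAddCommGroup Y] [NormedSpace ℝ Y] [CompleteSpace Y]
    [TopologicalSpace.SeparableSpace Y]
    {G : (Y →L[ℝ] ℝ) → EReal} (hG : ∀ y, G y ≠ ⊥) {F : (Y →L[ℝ] ℝ) → ℝ}
    {x : Y →L[ℝ] ℝ} (hx : G x ≠ ⊤) {F' : Y} {Q : (Y →L[ℝ] ℝ) → ℝ}
    (hTaylor : HasWeakStarTaylorOnDom F G x F' Q)
    (hlsc : WeakStarSeqLSC Q) (hNDC : NonDegenerate G x F' Q)
    (hAlt : WeakStarSeqUSC Q ∨ UpperSemicontinuous Q ∧ StronglyTwiceEpiDiff G x (-F')) :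
    (∀ h : Y →L[ℝ] ℝ, h ≠ 0 → 0 < (Q h : EReal) + weakStarSecondSubderiv G x (-F') h) ↔
      ∃ c : ℝ, 0 < c ∧ ∃ ε : ℝ, 0 < ε ∧ ∀ y, ‖y - x‖ ≤ ε → QuadraticGrowthAt F G x c y := by
  refine ⟨exists_quadraticGrowth_of_pos hG hx hTaylor hlsc hNDC, ?_⟩
  rintro ⟨c, hc, ε, hε, hgrowth⟩ h hne
  have hle := mul_norm_sq_sub_le_weakStarSecondSubderiv hG hx hTaylor hAlt hc.le hε hgrowth h
  have hpos : 0 < c * ‖h‖ ^ 2 := mul_pos hc (pow_pos (norm_pos_iff.2 hne) 2)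
  calc (0 : EReal) < ((c * ‖h‖ ^ 2 : ℝ) : EReal) := EReal.coe_pos.2 hpos
    _ = (Q h : EReal) + ((c * ‖h‖ ^ 2 - Q h : ℝ) : EReal) := by
      rw [← EReal.coe_add, add_sub_cancel]
    _ ≤ (Q h : EReal) + weakStarSecondSubderiv G x (-F') h := by gcongr

/-- Theorem 2.8, no-gap second-order optimality condition.
Under the Taylor expansion of `F`, sequential weak-* lower semicontinuity of
`h ↦ F''(x̄)h²`, the non-degeneracy condition (NDC), and either (i) sequential weak-*
upper semicontinuity of `h ↦ F''(x̄)h²` or (ii) strong twice epi-differentiability of `G`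
at `x̄` for `−F'(x̄)`, the positivity `F''(x̄)h² + G''(x̄, −F'(x̄); h) > 0` for all
`h ≠ 0` is equivalent to quadratic growth of `F + G` near `x̄` with some `c > 0`,
`ε > 0`. -/
theorem no_gap_second_order_condition
    {Y : Type*} [NormedAddCommGroup Y] [NormedSpace ℝ Y] [CompleteSpace Y]
    [TopologicalSpace.SeparableSpace Y]
    (G : (Y →L[ℝ] ℝ) → EReal) (hGbot : ∀ x, G x ≠ ⊥)
    (F : (Y →L[ℝ] ℝ) → ℝ)
    (xbar : Y →L[ℝ] ℝ) (hxbar : G xbar ≠ ⊤)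
    (F' : Y) (F'' : (Y →L[ℝ] ℝ) →L[ℝ] (Y →L[ℝ] ℝ) →L[ℝ] ℝ)
    (hTaylor : ∀ (t : ℕ → ℝ) (hs : ℕ → (Y →L[ℝ] ℝ)) (h : Y →L[ℝ] ℝ),
      (∀ k, 0 < t k) → Tendsto t atTop (𝓝 0) →
      (∀ z : Y, Tendsto (fun k => hs k z) atTop (𝓝 (h z))) →
      (∀ k, G (xbar + t k • hs k) ≠ ⊤) →
      Tendsto (fun k => (F (xbar + t k • hs k) - F xbar - t k * hs k F'
          - (1 / 2) * (t k) ^ 2 * F'' (hs k) (hs k)) / (t k) ^ 2) atTop (𝓝 0))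
    -- sequential weak-* lower semicontinuity of `h ↦ F''(x̄)h²`
    (hlsc : ∀ (h : Y →L[ℝ] ℝ) (hs : ℕ → (Y →L[ℝ] ℝ)),
      (∀ z : Y, Tendsto (fun k => hs k z) atTop (𝓝 (h z))) →
      ((F'' h h : ℝ) : EReal) ≤ liminf (fun k => ((F'' (hs k) (hs k) : ℝ) : EReal)) atTop)
    -- non-degeneracy condition (NDC)
    (hNDC : ∀ (t : ℕ → ℝ) (hs : ℕ → (Y →L[ℝ] ℝ)),
      (∀ k, 0 < t k) → Tendsto t atTop (𝓝 0) →
      (∀ z : Y, Tendsto (fun k => hs k z) atTop (𝓝 (0 : ℝ))) →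
      (∀ k, ‖hs k‖ = 1) →
      (0 : EReal) < liminf (fun k =>
        ((1 / (t k) ^ 2 : ℝ) : EReal) * (G (xbar + t k • hs k) - G xbar)
          + ((hs k F' / t k + (1 / 2) * F'' (hs k) (hs k) : ℝ) : EReal)) atTop)
    -- (i) weak-* upper semicontinuity of `F''` or (ii) strong twice epi-differentiability
    (hAlt :
      (∀ (h : Y →L[ℝ] ℝ) (hs : ℕ → (Y →L[ℝ] ℝ)),
        (∀ z : Y, Tendsto (fun k => hs k z) atTop (𝓝 (h z))) →
        limsup (fun k => ((F'' (hs k) (hs k) : ℝ) : EReal)) atTop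
          ≤ ((F'' h h : ℝ) : EReal))
      ∨ StronglyTwiceEpiDiff G xbar (-F')) :
    (∀ h : Y →L[ℝ] ℝ, h ≠ 0 →
        (0 : EReal) < ((F'' h h : ℝ) : EReal) + weakStarSecondSubderiv G xbar (-F') h)
      ↔ ∃ c : ℝ, 0 < c ∧ ∃ ε : ℝ, 0 < ε ∧
          ∀ x : Y →L[ℝ] ℝ, ‖x - xbar‖ ≤ ε →
            ((F xbar : ℝ) : EReal) + G xbar + ((c / 2 * ‖x - xbar‖ ^ 2 : ℝ) : EReal)
              ≤ ((F x : ℝ) : EReal) + G x := by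
  have hcont : Continuous fun h => F'' h h := by fun_prop
  exact no_gap_second_order_condition_general hGbot hxbar (Q := fun h => F'' h h)
    hTaylor hlsc hNDC (hAlt.imp_right fun hepi => ⟨hcont.upperSemicontinuous, hepi⟩)
end

section
/- Let w ∈ C¹(ℝ) be such that {w = 0} = {0} and w'(0) ≠ 0, let z ∈ C_c(ℝ), and for t > 0 set Ω_t := { x ∈ ℝ : sign(w(x)) ≠ sign(w(x) + t z(x)) }. Then for every ψ ∈ C(ℝ), as t ↓ 0: (a) (1/t) ∫_{Ω_t} ψ dλ¹ → ψ(0)|z(0)| / |w'(0)|; (b) (1/t) ∫_{Ω_t} ψ·sign(z) dλ¹ → ψ(0) z(0) / |w'(0)|; (c) (1/t) ∫_{Ω_t} (|w|/t) dλ¹ → (1/2) z(0)² / |w'(0)|. -/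
open Filter Topology MeasureTheory

/-!
Only the infinitesimal behaviour at the origin matters. On `Ω_t` one has `|w| ≤ t |z|`, and since
`x z(x) / w(x)` is bounded, `Ω_t` lies in a ball of radius `O(t)`. Substituting `x = t y` turns
`t⁻¹ ∫_{Ω_t}` into an integral over the bounded set `t⁻¹ Ω_t`. As `w (t y) / t → w'(0) y` and
`z (t y) → z 0`, this set converges, for every `y` outside a null set, to the interval with
endpoints `0` and `-z 0 / w'(0)` on which `w'(0) y` and `w'(0) y + z 0` have opposite signs.
Dominated convergence then gives all three limits.
-/

open Set Metric Module
open scoped NNReal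

theorem realSign_eq_coe_sign (r : ℝ) : Real.sign r = (SignType.sign r : ℝ) := by
  rcases lt_trichotomy r 0 with hr | rfl | hr
  · simp [Real.sign_of_neg hr, sign_neg hr]
  · simp
  · simp [Real.sign_of_pos hr, sign_pos hr]

theorem realSign_eq_realSign_iff {p q : ℝ} :
    Real.sign p = Real.sign q ↔ SignType.sign p = SignType.sign q := by
  rw [realSign_eq_coe_sign, realSign_eq_coe_sign]
  cases SignType.sign p <;> cases SignType.sign q <;> simp <;> grind

theorem realSign_mul_abs (r : ℝ) : Real.sign r * |r| = r := by
  rw [realSign_eq_coe_sign, sign_mul_abs]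

theorem abs_realSign_le_one (r : ℝ) : |Real.sign r| ≤ 1 := by
  rcases Real.sign_apply_eq r with h | h | h <;> simp [h]

theorem measurable_realSign : Measurable Real.sign :=
  Measurable.ite measurableSet_Iio measurable_const
    (Measurable.ite measurableSet_Ioi measurable_const measurable_const)

theorem continuousAt_realSign_of_ne_zero {r : ℝ} (hr : r ≠ 0) : ContinuousAt Real.sign r := by
  rw [funext realSign_eq_coe_sign]
  exact (continuous_of_discreteTopology (f := ((↑) : SignType → ℝ))).continuousAt.comp
    (continuousAt_sign_of_ne_zero hr)

theorem abs_le_abs_of_sign_ne_sign_add {p q : ℝ}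
    (h : SignType.sign p ≠ SignType.sign (p + q)) : |p| ≤ |q| := by
  contrapose! h
  rcases lt_trichotomy p 0 with hp | rfl | hp
  · rw [abs_of_neg hp, abs_lt] at h
    rw [sign_neg hp, sign_neg (by linarith)]
  · exact absurd h (by simp)
  · rw [abs_of_pos hp, abs_lt] at h
    rw [sign_pos hp, sign_pos (by linarith)]

theorem sign_ne_sign_sub_iff_mem_uIoc {b y : ℝ} (hy : y ≠ 0) (hyb : y ≠ b) :
    SignType.sign y ≠ SignType.sign (y - b) ↔ y ∈ uIoc 0 b := by
  rw [mem_uIoc]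
  rcases hy.lt_or_gt with hy | hy <;> rcases hyb.lt_or_gt with hyb | hyb
  · simp [sign_neg hy, sign_neg (sub_neg.2 hyb), hy.not_gt, hyb.not_gt]
  · simp [sign_neg hy, sign_pos (sub_pos.2 hyb), hy.le, hyb]
  · simp [sign_pos hy, sign_neg (sub_neg.2 hyb), hy, hyb.le]
  · simp [sign_pos hy, sign_pos (sub_pos.2 hyb), hy.not_ge, hyb.not_ge]

theorem volume_real_uIoc (a b : ℝ) : volume.real (uIoc a b) = |b - a| := by
  rw [Measure.real, Real.volume_uIoc, ENNReal.toReal_ofReal (abs_nonneg _)]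

theorem setIntegral_uIoc_abs_mul (a b : ℝ) :
    ∫ y in uIoc 0 b, |a * y| = |a| * b ^ 2 / 2 := by
  have h : ∫ y in uIoc 0 b, |y| = b ^ 2 / 2 := by
    simpa [one_add_one_eq_two] using integral_pow_abs_sub_uIoc (a := 0) (b := b) (n := 1)
  simp_rw [abs_mul]
  rw [integral_const_mul, h, mul_div_assoc]

section Rescaling

theorem tendsto_mul_const_nhdsGT_zero (y : ℝ) : Tendsto (fun t : ℝ => t * y) (𝓝[>] 0) (𝓝 0) := by
  simpa using ((continuous_mul_const y).tendsto 0).mono_left nhdsWithin_le_nhds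

theorem tendsto_comp_mul_const_nhdsGT_zero {X : Type*} [TopologicalSpace X] {f : ℝ → X}
    (hf : ContinuousAt f 0) (y : ℝ) : Tendsto (fun t => f (t * y)) (𝓝[>] 0) (𝓝 (f 0)) :=
  hf.tendsto.comp (tendsto_mul_const_nhdsGT_zero y)

theorem tendsto_comp_mul_div {w : ℝ → ℝ} {a : ℝ} (hw : HasDerivAt w a 0) (hw0 : w 0 = 0) (y : ℝ) :
    Tendsto (fun t : ℝ => w (t * y) / t) (𝓝[>] 0) (𝓝 (a * y)) := by
  have hline : HasDerivAt (fun t : ℝ => w (t * y)) (a * y) 0 := by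
    refine HasDerivAt.comp (0 : ℝ) ?_ (hasDerivAt_mul_const y)
    rwa [zero_mul]
  simpa [hw0, div_eq_inv_mul] using hline.tendsto_slope_zero_right

theorem tendsto_indicator_of_eventually_mem_iff {ι α β E : Type*} [Zero E] [TopologicalSpace E]
    {l : Filter ι} {s : ι → Set α} {F : ι → α → E} {x : ι → α} {S : Set β} {g : β → E} {y : β}
    (hmem : ∀ᶠ t in l, x t ∈ s t ↔ y ∈ S)
    (hlim : y ∈ S → Tendsto (fun t => F t (x t)) l (𝓝 (g y))) :
    Tendsto (fun t => (s t).indicator (F t) (x t)) l (𝓝 (S.indicator g y)) := by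
  by_cases hy : y ∈ S
  · rw [indicator_of_mem hy]
    refine (hlim hy).congr' ?_
    filter_upwards [hmem] with t ht
    rw [indicator_of_mem (ht.2 hy)]
  · rw [indicator_of_notMem hy]
    refine tendsto_const_nhds.congr' ?_
    filter_upwards [hmem] with t ht
    rw [indicator_of_notMem (mt ht.1 hy)]

variable {V E : Type*} [NormedAddCommGroup V] [NormedSpace ℝ V] [NormedAddCommGroup E]

theorem norm_indicator_smul_le {s : Set V} {F : V → E} {t R M : ℝ} (ht : 0 < t)
    (hs : s ⊆ closedBall 0 (t * R)) (hF : ∀ x ∈ s, ‖F x‖ ≤ M) (y : V) :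
    ‖s.indicator F (t • y)‖ ≤ (closedBall 0 R).indicator (fun _ => |M|) y := by
  by_cases hy : t • y ∈ s
  · have hyR : y ∈ closedBall 0 R := by
      have := hs hy
      rw [mem_closedBall_zero_iff, norm_smul, Real.norm_of_nonneg ht.le] at this
      exact mem_closedBall_zero_iff.2 (le_of_mul_le_mul_left this ht)
    rw [indicator_of_mem hy, indicator_of_mem hyR]
    exact (hF _ hy).trans (le_abs_self M)
  · rw [indicator_of_notMem hy, norm_zero]
    exact indicator_nonneg (fun _ _ => abs_nonneg M) y

variable [FiniteDimensional ℝ V] [MeasurableSpace V] [BorelSpace V] (μ : Measure V)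
  [μ.IsAddHaarMeasure]

theorem aestronglyMeasurable_indicator_comp_smul {s : Set V} {F : V → E} {t : ℝ} (ht : t ≠ 0)
    (hs : MeasurableSet s) (hF : AEStronglyMeasurable F (μ.restrict s)) :
    AEStronglyMeasurable (fun y => s.indicator F (t • y)) μ :=
  ((aestronglyMeasurable_indicator_iff hs).2 hF).comp_quasiMeasurePreserving
    (Measure.quasiMeasurePreserving_smul μ ht)

theorem tendsto_inv_pow_smul_setIntegral_of_tendsto_indicator [NormedSpace ℝ E] {s : ℝ → Set V}
    {F : ℝ → V → E} {g : V → E} {R M : ℝ} (hs : ∀ᶠ t in 𝓝[>] 0, MeasurableSet (s t))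
    (hsR : ∀ᶠ t in 𝓝[>] 0, s t ⊆ closedBall 0 (t * R))
    (hF : ∀ᶠ t in 𝓝[>] 0, AEStronglyMeasurable (F t) (μ.restrict (s t)))
    (hFM : ∀ᶠ t in 𝓝[>] 0, ∀ x ∈ s t, ‖F t x‖ ≤ M)
    (hlim : ∀ᵐ y ∂μ, Tendsto (fun t => (s t).indicator (F t) (t • y)) (𝓝[>] 0) (𝓝 (g y))) :
    Tendsto (fun t => (t ^ finrank ℝ V)⁻¹ • ∫ x in s t, F t x ∂μ) (𝓝[>] 0)
      (𝓝 (∫ y, g y ∂μ)) := by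
  have hbound : Integrable ((closedBall (0 : V) R).indicator fun _ => |M|) μ :=
    (integrable_indicator_iff measurableSet_closedBall).2
      (integrableOn_const measure_closedBall_lt_top.ne)
  have hrescaled : Tendsto (fun t => ∫ y, (s t).indicator (F t) (t • y) ∂μ) (𝓝[>] 0)
      (𝓝 (∫ y, g y ∂μ)) := by
    refine tendsto_integral_filter_of_dominated_convergence _ ?_ ?_ hbound hlim
    · filter_upwards [self_mem_nhdsWithin, hs, hF] with t ht hst hFt
      exact aestronglyMeasurable_indicator_comp_smul μ (ne_of_gt ht) hst hFt
    · filter_upwards [self_mem_nhdsWithin, hsR, hFM] with t ht hsRt hFMt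
      exact .of_forall (norm_indicator_smul_le ht hsRt hFMt)
  refine hrescaled.congr' ?_
  filter_upwards [self_mem_nhdsWithin, hs] with t ht hst
  rw [Measure.integral_comp_smul_of_nonneg μ _ t (hR := le_of_lt ht), integral_indicator hst]

end Rescaling

/-- The set `Ω_t` of points at which `w` and its perturbation `w + t z` differ in sign, where the
sign of zero is zero. -/
def signChangeSet {α : Type*} (w z : α → ℝ) (t : ℝ) : Set α :=
  {x | Real.sign (w x) ≠ Real.sign (w x + t * z x)}

section Basic

variable {α : Type*} {w z : α → ℝ} {t : ℝ} {x : α}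

theorem mem_signChangeSet_iff :
    x ∈ signChangeSet w z t ↔ SignType.sign (w x) ≠ SignType.sign (w x + t * z x) :=
  realSign_eq_realSign_iff.not

theorem mem_signChangeSet_iff_div (ht : 0 < t) :
    x ∈ signChangeSet w z t ↔ SignType.sign (w x / t) ≠ SignType.sign (w x / t + z x) := by
  have hsum : w x / t + z x = (w x + t * z x) / t := by field_simp
  have hsign_div (r : ℝ) : SignType.sign (r / t) = SignType.sign r := by
    rw [div_eq_mul_inv, sign_mul, sign_pos (inv_pos.2 ht), mul_one]
  rw [mem_signChangeSet_iff, hsum, hsign_div, hsign_div]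

theorem measurableSet_signChangeSet [MeasurableSpace α] (hw : Measurable w) (hz : Measurable z)
    (t : ℝ) : MeasurableSet (signChangeSet w z t) :=
  (measurableSet_eq_fun (measurable_realSign.comp hw)
    (measurable_realSign.comp (hw.add (hz.const_mul t)))).compl

theorem abs_le_of_mem_signChangeSet (ht : 0 < t) (hx : x ∈ signChangeSet w z t) :
    |w x| ≤ t * |z x| := by
  simpa [abs_mul, abs_of_pos ht] using
    abs_le_abs_of_sign_ne_sign_add (mem_signChangeSet_iff.1 hx)

theorem ne_zero_of_mem_signChangeSet (hx : x ∈ signChangeSet w z t) : z x ≠ 0 :=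
  fun hzx => hx (by rw [hzx, mul_zero, add_zero])

end Basic

section Localization

variable {w z : ℝ → ℝ} {R : ℝ≥0}

theorem exists_abs_mul_le_mul_abs {a : ℝ} (hw : Continuous w) (hzero : ∀ x, w x = 0 ↔ x = 0)
    (hwa : HasDerivAt w a 0) (ha : a ≠ 0) (hz : Continuous z) (hzc : HasCompactSupport z) :
    ∃ R : ℝ≥0, ∀ x, |x * z x| ≤ R * |w x| := by
  have hmul (x : ℝ) : x * dslope w 0 x = w x := by
    simpa [(hzero 0).2 rfl] using sub_smul_dslope w 0 x
  have hcont : Continuous (dslope w 0) := by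
    rw [← continuousOn_univ, continuousOn_dslope univ_mem]
    exact ⟨hw.continuousOn, hwa.differentiableAt⟩
  have hne (x : ℝ) : dslope w 0 x ≠ 0 := by
    intro hx
    obtain rfl : x = 0 := (hzero x).1 (by rw [← hmul x, hx, mul_zero])
    exact ha (by rwa [dslope_same, hwa.deriv] at hx)
  obtain ⟨C, hC⟩ := (hz.mul (hcont.inv₀ hne)).bounded_above_of_compact_support hzc.mul_right
  refine ⟨C.toNNReal, fun x => ?_⟩
  calc |x * z x| = |z x * (dslope w 0 x)⁻¹| * |w x| := by
        rw [← abs_mul, ← hmul x]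
        congr 1
        field_simp [hne x]
    _ ≤ C.toNNReal * |w x| := by
        gcongr
        exact (hC x).trans C.le_coe_toNNReal

theorem signChangeSet_subset_closedBall (hR : ∀ x, |x * z x| ≤ R * |w x|) {t : ℝ} (ht : 0 < t) :
    signChangeSet w z t ⊆ closedBall 0 (t * R) := by
  intro x hx
  have hzx : 0 < |z x| := abs_pos.2 (ne_zero_of_mem_signChangeSet hx)
  have hwz := abs_le_of_mem_signChangeSet ht hx
  rw [mem_closedBall_zero_iff, Real.norm_eq_abs]
  refine le_of_mul_le_mul_right ?_ hzx
  calc |x| * |z x| ≤ R * |w x| := abs_mul x (z x) ▸ hR x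
    _ ≤ R * (t * |z x|) := by gcongr
    _ = t * R * |z x| := by ring

theorem tendsto_signChangeSet_smallSets (hR : ∀ x, |x * z x| ≤ R * |w x|) :
    Tendsto (signChangeSet w z) (𝓝[>] 0) (𝓝 0).smallSets := by
  refine ((tendsto_closedBall_smallSets (0 : ℝ)).comp
    (tendsto_mul_const_nhdsGT_zero R)).smallSets_mono ?_
  filter_upwards [self_mem_nhdsWithin] with t ht
  exact signChangeSet_subset_closedBall hR ht

end Localization

section Limits

variable {w z : ℝ → ℝ} {a : ℝ}

theorem eventually_mul_mem_signChangeSet_iff (hw0 : w 0 = 0) (hwa : HasDerivAt w a 0) (ha : a ≠ 0)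
    (hz0 : ContinuousAt z 0) {y : ℝ} (hy : y ≠ 0) (hyb : y ≠ -z 0 / a) :
    ∀ᶠ t in 𝓝[>] 0, t * y ∈ signChangeSet w z t ↔ y ∈ uIoc 0 (-z 0 / a) := by
  have hw_lim := tendsto_comp_mul_div hwa hw0 y
  have hsum_lim : Tendsto (fun t => w (t * y) / t + z (t * y)) (𝓝[>] 0)
      (𝓝 (a * (y - -z 0 / a))) := by
    convert hw_lim.add (tendsto_comp_mul_const_nhdsGT_zero hz0 y) using 2
    field_simp
    ring
  have hw_sign := (continuousAt_sign_of_ne_zero (mul_ne_zero ha hy)).tendsto.comp hw_lim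
  have hsum_sign :=
    (continuousAt_sign_of_ne_zero (mul_ne_zero ha (sub_ne_zero.2 hyb))).tendsto.comp hsum_lim
  rw [nhds_discrete, tendsto_pure] at hw_sign hsum_sign
  filter_upwards [self_mem_nhdsWithin, hw_sign, hsum_sign] with t ht hwt hst
  rw [mem_signChangeSet_iff_div ht, ← sign_ne_sign_sub_iff_mem_uIoc hy hyb]
  simp only [Function.comp_apply] at hwt hst
  rw [hwt, hst, sign_mul, sign_mul, (mul_right_injective₀ (sign_ne_zero.2 ha)).ne_iff]

variable {R : ℝ≥0} {E : Type*} [NormedAddCommGroup E] [NormedSpace ℝ E] [CompleteSpace E]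
  {ψ : ℝ → E}

theorem tendsto_inv_smul_setIntegral_signChangeSet_smul
    (hw : Measurable w) (hw0 : w 0 = 0) (hwa : HasDerivAt w a 0) (ha : a ≠ 0)
    (hz : Measurable z) (hz0 : ContinuousAt z 0) (hR : ∀ x, |x * z x| ≤ R * |w x|)
    (hψ : StronglyMeasurableAtFilter ψ (𝓝 0)) (hψ0 : ContinuousAt ψ 0)
    {u : ℝ → ℝ → ℝ} {g : ℝ → ℝ} {M : ℝ} (hu : ∀ t, Measurable (u t))
    (huM : ∀ᶠ t in 𝓝[>] 0, ∀ x ∈ signChangeSet w z t, |u t x| ≤ M)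
    (hug : ∀ y ∈ uIoc 0 (-z 0 / a), Tendsto (fun t => u t (t * y)) (𝓝[>] 0) (𝓝 (g y))) :
    Tendsto (fun t => t⁻¹ • ∫ x in signChangeSet w z t, u t x • ψ x) (𝓝[>] 0)
      (𝓝 ((∫ y in uIoc 0 (-z 0 / a), g y) • ψ 0)) := by
  have hsmall := tendsto_signChangeSet_smallSets hR
  have hψ_bound : ∀ᶠ x in 𝓝 0, ‖ψ x‖ ≤ ‖ψ 0‖ + 1 :=
    (hψ0.norm.eventually_lt_const (lt_add_one _)).mono fun _ => le_of_lt
  rw [← integral_smul_const, ← integral_indicator measurableSet_uIoc]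
  have hlim := tendsto_inv_pow_smul_setIntegral_of_tendsto_indicator (volume : Measure ℝ)
    (s := signChangeSet w z) (F := fun t x => u t x • ψ x) (R := R) (M := M * (‖ψ 0‖ + 1))
    (g := (uIoc 0 (-z 0 / a)).indicator fun y => g y • ψ 0) ?_ ?_ ?_ ?_ ?_
  · simpa using hlim
  · exact .of_forall (measurableSet_signChangeSet hw hz)
  · filter_upwards [self_mem_nhdsWithin] with t ht
    exact signChangeSet_subset_closedBall hR ht
  · filter_upwards [hsmall.eventually hψ.eventually] with t ht
    exact (hu t).aestronglyMeasurable.smul ht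
  · filter_upwards [huM, hsmall.eventually hψ_bound.smallSets] with t hut hψt x hx
    rw [norm_smul]
    exact mul_le_mul (hut x hx) (hψt x hx) (norm_nonneg _) ((abs_nonneg _).trans (hut x hx))
  · filter_upwards [Measure.ae_ne volume 0, Measure.ae_ne volume (-z 0 / a)] with y hy hyb
    exact tendsto_indicator_of_eventually_mem_iff
      (eventually_mul_mem_signChangeSet_iff hw0 hwa ha hz0 hy hyb)
      fun hyI => (hug y hyI).smul (tendsto_comp_mul_const_nhdsGT_zero hψ0 y)

theorem tendsto_inv_smul_setIntegral_signChangeSet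
    (hw : Measurable w) (hw0 : w 0 = 0) (hwa : HasDerivAt w a 0) (ha : a ≠ 0)
    (hz : Measurable z) (hz0 : ContinuousAt z 0) (hR : ∀ x, |x * z x| ≤ R * |w x|)
    (hψ : StronglyMeasurableAtFilter ψ (𝓝 0)) (hψ0 : ContinuousAt ψ 0) :
    Tendsto (fun t => t⁻¹ • ∫ x in signChangeSet w z t, ψ x) (𝓝[>] 0)
      (𝓝 ((|z 0| / |a|) • ψ 0)) := by
  simpa [volume_real_uIoc, abs_div] using tendsto_inv_smul_setIntegral_signChangeSet_smul
    hw hw0 hwa ha hz hz0 hR hψ hψ0 (u := fun _ _ => 1) (g := fun _ => 1) (M := 1)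
    (fun _ => measurable_const) (by simp) (fun _ _ => tendsto_const_nhds)

theorem tendsto_inv_smul_setIntegral_signChangeSet_sign_smul
    (hw : Measurable w) (hw0 : w 0 = 0) (hwa : HasDerivAt w a 0) (ha : a ≠ 0)
    (hz : Measurable z) (hz0 : ContinuousAt z 0) (hR : ∀ x, |x * z x| ≤ R * |w x|)
    (hψ : StronglyMeasurableAtFilter ψ (𝓝 0)) (hψ0 : ContinuousAt ψ 0) :
    Tendsto (fun t => t⁻¹ • ∫ x in signChangeSet w z t, Real.sign (z x) • ψ x) (𝓝[>] 0)
      (𝓝 ((z 0 / |a|) • ψ 0)) := by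
  have hsign (y : ℝ) (hy : y ∈ uIoc 0 (-z 0 / a)) :
      Tendsto (fun t => Real.sign (z (t * y))) (𝓝[>] 0) (𝓝 (Real.sign (z 0))) := by
    have hz_ne : z 0 ≠ 0 := fun h => by simp [h] at hy
    exact tendsto_comp_mul_const_nhdsGT_zero
      (ContinuousAt.comp (continuousAt_realSign_of_ne_zero hz_ne) hz0) y
  convert tendsto_inv_smul_setIntegral_signChangeSet_smul hw hw0 hwa ha hz hz0 hR hψ hψ0
    (u := fun _ x => Real.sign (z x)) (fun _ => measurable_realSign.comp hz)
    (.of_forall fun _ x _ => abs_realSign_le_one (z x)) hsign using 3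
  rw [setIntegral_const, volume_real_uIoc, sub_zero, abs_div, abs_neg, smul_eq_mul,
    div_mul_eq_mul_div, mul_comm, realSign_mul_abs]

theorem tendsto_inv_smul_setIntegral_signChangeSet_abs_div_smul
    (hw : Measurable w) (hw0 : w 0 = 0) (hwa : HasDerivAt w a 0) (ha : a ≠ 0)
    (hz : Measurable z) (hz0 : ContinuousAt z 0) (hR : ∀ x, |x * z x| ≤ R * |w x|)
    (hψ : StronglyMeasurableAtFilter ψ (𝓝 0)) (hψ0 : ContinuousAt ψ 0) :
    Tendsto (fun t => t⁻¹ • ∫ x in signChangeSet w z t, (|w x| / t) • ψ x) (𝓝[>] 0)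
      (𝓝 ((z 0 ^ 2 / (2 * |a|)) • ψ 0)) := by
  have hz_bound : ∀ᶠ x in 𝓝 0, |z x| ≤ |z 0| + 1 :=
    (hz0.abs.eventually_lt_const (lt_add_one _)).mono fun _ => le_of_lt
  have hbound : ∀ᶠ t in 𝓝[>] 0, ∀ x ∈ signChangeSet w z t, |(|w x| / t)| ≤ |z 0| + 1 := by
    filter_upwards [self_mem_nhdsWithin,
      (tendsto_signChangeSet_smallSets hR).eventually hz_bound.smallSets] with t ht hzt x hx
    have ht : 0 < t := ht
    rw [abs_div, abs_abs, abs_of_pos ht]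
    exact ((div_le_iff₀' ht).2 (abs_le_of_mem_signChangeSet ht hx)).trans (hzt x hx)
  have hlim (y : ℝ) : Tendsto (fun t => |w (t * y)| / t) (𝓝[>] 0) (𝓝 |a * y|) := by
    refine (tendsto_comp_mul_div hwa hw0 y).abs.congr' ?_
    filter_upwards [self_mem_nhdsWithin] with t ht
    rw [abs_div, abs_of_pos (mem_Ioi.1 ht)]
  convert tendsto_inv_smul_setIntegral_signChangeSet_smul hw hw0 hwa ha hz hz0 hR hψ hψ0
    (fun t => hw.abs.div_const t) hbound (fun y _ => hlim y) using 3
  rw [setIntegral_uIoc_abs_mul, div_pow, neg_sq, ← sq_abs a]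
  field_simp

end Limits

theorem one_dimensional_sign_change_integral_limits_general
    {E : Type*} [NormedAddCommGroup E] [NormedSpace ℝ E] [CompleteSpace E]
    {w z : ℝ → ℝ} {a : ℝ} {R : ℝ≥0} {ψ : ℝ → E}
    (hw : Measurable w) (hw0 : w 0 = 0) (hwa : HasDerivAt w a 0) (ha : a ≠ 0)
    (hz : Measurable z) (hz0 : ContinuousAt z 0) (hR : ∀ x, |x * z x| ≤ R * |w x|)
    (hψ : StronglyMeasurableAtFilter ψ (𝓝 0)) (hψ0 : ContinuousAt ψ 0) :
    Tendsto (fun t => t⁻¹ • ∫ x in signChangeSet w z t, ψ x) (𝓝[>] 0)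
        (𝓝 ((|z 0| / |a|) • ψ 0)) ∧
    Tendsto (fun t => t⁻¹ • ∫ x in signChangeSet w z t, Real.sign (z x) • ψ x) (𝓝[>] 0)
        (𝓝 ((z 0 / |a|) • ψ 0)) ∧
    Tendsto (fun t => t⁻¹ • ∫ x in signChangeSet w z t, (|w x| / t) • ψ x) (𝓝[>] 0)
        (𝓝 ((z 0 ^ 2 / (2 * |a|)) • ψ 0)) :=
  ⟨tendsto_inv_smul_setIntegral_signChangeSet hw hw0 hwa ha hz hz0 hR hψ hψ0,
    tendsto_inv_smul_setIntegral_signChangeSet_sign_smul hw hw0 hwa ha hz hz0 hR hψ hψ0,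
    tendsto_inv_smul_setIntegral_signChangeSet_abs_div_smul hw hw0 hwa ha hz hz0 hR hψ hψ0⟩

/-- Lemma 3.1, one-dimensional case.
Let `w ∈ C¹(ℝ)` with `{w = 0} = {0}` and `w'(0) ≠ 0`, let `z ∈ C_c(ℝ)`, and for `t > 0` set
`Ω_t := { x | sign(w x) ≠ sign(w x + t z x) }`.  Then for every continuous `ψ : ℝ → ℝ`, as
`t ↓ 0`:
(a) `(1/t) ∫_{Ω_t} ψ dλ¹ → ψ(0)|z(0)|/|w'(0)|`;
(b) `(1/t) ∫_{Ω_t} ψ·sign(z) dλ¹ → ψ(0) z(0)/|w'(0)|`;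
(c) `(1/t) ∫_{Ω_t} |w|/t dλ¹ → (1/2) z(0)²/|w'(0)|`. -/
theorem one_dimensional_sign_change_integral_limits
    (w : ℝ → ℝ) (hw : ContDiff ℝ 1 w)
    (hzero : ∀ x : ℝ, w x = 0 ↔ x = 0) (hw' : deriv w 0 ≠ 0)
    (z : ℝ → ℝ) (hz : Continuous z) (hzc : HasCompactSupport z)
    (Ωt : ℝ → Set ℝ)
    (hΩt : ∀ t : ℝ, Ωt t = { x : ℝ | Real.sign (w x) ≠ Real.sign (w x + t * z x) })
    (ψ : ℝ → ℝ) (hψ : Continuous ψ) :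
    Tendsto (fun t : ℝ => (1 / t) * ∫ x in Ωt t, ψ x ∂(volume : Measure ℝ))
        (𝓝[>] 0) (𝓝 (ψ 0 * |z 0| / |deriv w 0|)) ∧
    Tendsto (fun t : ℝ => (1 / t) * ∫ x in Ωt t, ψ x * Real.sign (z x) ∂(volume : Measure ℝ))
        (𝓝[>] 0) (𝓝 (ψ 0 * z 0 / |deriv w 0|)) ∧
    Tendsto (fun t : ℝ => (1 / t) * ∫ x in Ωt t, |w x| / t ∂(volume : Measure ℝ))
        (𝓝[>] 0) (𝓝 ((1 / 2) * z 0 ^ 2 / |deriv w 0|)) := by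
  obtain rfl : Ωt = signChangeSet w z := funext hΩt
  have hwa : HasDerivAt w (deriv w 0) 0 := (hw.differentiable one_ne_zero 0).hasDerivAt
  obtain ⟨R, hR⟩ := exists_abs_mul_le_mul_abs hw.continuous hzero hwa hw' hz hzc
  have limits {φ : ℝ → ℝ} (hφ : Continuous φ) :=
    one_dimensional_sign_change_integral_limits_general hw.continuous.measurable ((hzero 0).2 rfl)
      hwa hw' hz.measurable hz.continuousAt hR (hφ.stronglyMeasurableAtFilter volume (𝓝 0))
      hφ.continuousAt
  have hψ_lim := limits hψ
  have hone_lim := limits (continuous_const (y := (1 : ℝ)))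
  simp only [smul_eq_mul, one_mul, mul_one, div_eq_mul_inv, mul_inv, mul_comm,
    mul_left_comm, mul_assoc] at hψ_lim hone_lim ⊢
  exact ⟨hψ_lim.1, hψ_lim.2.1, hone_lim.2.2⟩
end
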